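/- arXiv:2008.09199 — 2 statements merged into one kernel-verified Lean document; each statement's English description precedes it below -/
import Mathlib

section
/- Let X be a proper CAT(0) space with base-point 𝔬 and let b be a geodesic ray based at 𝔬. Then b is κ-contracting if and only if there exists a constant c > 0 such that for all x, y ∈ X with d(x,y) < d(x,b), one has d(x_b, y_b) ≤ c·κ(‖x_b‖). -/
open Set Metric Filter ENNReal

noncomputable section

/-- The set of points lying on a geodesic from `x` to `y`; in a uniquely geodesic space
(such as a CAT(0) space) this is the geodesic segment `[x,y]`. -/
def seg {X : Type*} [MetricSpace X] (x y : X) : Set X :=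
  {z | dist x z + dist z y = dist x y}

/-- `X` is a geodesic metric space. -/
def GeodesicSpace (X : Type*) [MetricSpace X] : Prop :=
  ∀ x y : X, ∃ γ : ℝ → X, γ 0 = x ∧ γ (dist x y) = y ∧
    ∀ s ∈ Icc (0:ℝ) (dist x y), ∀ t ∈ Icc (0:ℝ) (dist x y), dist (γ s) (γ t) = |s - t|

/-- `X` is a CAT(0) space: a geodesic metric space satisfying the CN (Bruhat–Tits)
inequality (comparison of triangles with Euclidean ones). -/
def IsCAT0 (X : Type*) [MetricSpace X] : Prop :=
  GeodesicSpace X ∧ ∀ x y z m : X, dist y m = dist y z / 2 → dist m z = dist y z / 2 →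
    dist x m ^ 2 ≤ (dist x y ^ 2 + dist x z ^ 2) / 2 - dist y z ^ 2 / 4

/-- `b` restricted to `[0,∞)` is a geodesic ray (an isometric embedding of `[0,∞)`). -/
def IsGeodesicRay {X : Type*} [MetricSpace X] (b : ℝ → X) : Prop :=
  ∀ s t : ℝ, 0 ≤ s → 0 ≤ t → dist (b s) (b t) = |s - t|

/-- The image of the geodesic ray `b`. -/
def rayIm {X : Type*} [MetricSpace X] (b : ℝ → X) : Set X := b '' Ici 0

/-- `κ` is a sublinear function: monotone increasing, concave, `≥ 1`, with `κ(t)/t → 0`. -/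
structure IsSublinearFn (κ : ℝ → ℝ) : Prop where
  one_le : ∀ t : ℝ, 1 ≤ κ t
  mono : Monotone κ
  concave : ConcaveOn ℝ (Ici 0) κ
  sublinear : Tendsto (fun t => κ t / t) atTop (nhds 0)

/-- `π` is the nearest-point projection onto the geodesic ray `b`:
`π x` lies on `b` and realizes the distance from `x` to `b`. -/
def IsProj {X : Type*} [MetricSpace X] (b : ℝ → X) (π : X → X) : Prop :=
  ∀ x : X, π x ∈ rayIm b ∧ dist x (π x) = infDist x (rayIm b)

/-- The geodesic ray `b` (with projection `π`) is `κ`-contracting: there is `c ≥ 0` such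
that whenever `d(x,y) ≤ d(x,b)` we have `d(x_b, y_b) ≤ c·κ(‖x‖)`. -/
def KappaContracting {X : Type*} [MetricSpace X] (κ : ℝ → ℝ) (o : X) (b : ℝ → X)
    (π : X → X) : Prop :=
  ∃ c ≥ (0:ℝ), ∀ x y : X, dist x y ≤ infDist x (rayIm b) →
    dist (π x) (π y) ≤ c * κ (dist o x)

/-- `b` is `κ`-contracting with contracting constant `c` (projection form, Lemma 2.6):
whenever `d(x,y) < d(x,b)` we have `d(x_b, y_b) ≤ c·κ(‖x_b‖)`. -/
def KappaContractingWith {X : Type*} [MetricSpace X] (κ : ℝ → ℝ) (o : X) (b : ℝ → X)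
    (π : X → X) (c : ℝ) : Prop :=
  0 ≤ c ∧ ∀ x y : X, dist x y < infDist x (rayIm b) →
    dist (π x) (π y) ≤ c * κ (dist o (π x))

/-- `z` is the point at fraction `l` from `p` to `x`, with the Stewart inequality. -/
def IsPt {X : Type*} [MetricSpace X] (p x : X) (l : ℝ) (z : X) : Prop :=
  dist p z = l * dist p x ∧ dist z x = (1 - l) * dist p x ∧
  ∀ u : X, dist u z ^ 2 ≤ (1 - l) * dist u p ^ 2 + l * dist u x ^ 2 - l * (1 - l) * dist p x ^ 2

lemma IsPt.symm {X : Type*} [MetricSpace X] {p x z : X} {l : ℝ} (h : IsPt p x l z) :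
    IsPt x p (1 - l) z := by
  obtain ⟨h1, h2, h3⟩ := h
  refine ⟨?_, ?_, fun u => ?_⟩
  · rw [dist_comm x z, h2, dist_comm x p]
  · rw [dist_comm z p, h1, dist_comm x p]; ring
  · have := h3 u
    rw [dist_comm x p]; linarith

lemma midconvex_aux (g : ℝ → ℝ) (L : ℝ) (hL : 0 ≤ L) (hc : ContinuousOn g (Icc 0 L))
    (h0 : g 0 ≤ 0) (h1 : g L ≤ 0)
    (hm : ∀ s ∈ Icc (0:ℝ) L, ∀ t ∈ Icc (0:ℝ) L, g ((s + t) / 2) ≤ (g s + g t) / 2) :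
    ∀ t ∈ Icc (0:ℝ) L, g t ≤ 0 := by
  obtain ⟨t1, ht1, hmax⟩ := isCompact_Icc.exists_isMaxOn (nonempty_Icc.mpr hL) hc
  rw [isMaxOn_iff] at hmax
  suffices hM : g t1 ≤ 0 from fun t ht => (hmax t ht).trans hM
  by_contra hM
  push Not at hM
  have hK : IsCompact (Icc 0 L ∩ g ⁻¹' {g t1}) :=
    isCompact_Icc.of_isClosed_subset
      (hc.preimage_isClosed_of_isClosed isClosed_Icc isClosed_singleton) inter_subset_left
  obtain ⟨t0, ⟨ht0, hgt0⟩, hmin⟩ := hK.exists_isLeast ⟨t1, ht1, rfl⟩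
  have hgt : g t0 = g t1 := hgt0
  have hpos : 0 < t0 := by
    rcases ht0.1.lt_or_eq with h | h
    · exact h
    · rw [← h] at hgt; linarith
  have hlt : t0 < L := by
    rcases ht0.2.lt_or_eq with h | h
    · exact h
    · rw [h] at hgt; linarith
  set d := min t0 (L - t0) with hd
  have hd0 : 0 < d := lt_min hpos (by linarith)
  have hd1 : d ≤ t0 := min_le_left _ _
  have hd2 : d ≤ L - t0 := min_le_right _ _
  have ha : t0 - d ∈ Icc (0:ℝ) L := ⟨by linarith, by linarith⟩
  have hb : t0 + d ∈ Icc (0:ℝ) L := ⟨by linarith, by linarith⟩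
  have := hm _ ha _ hb
  rw [show (t0 - d + (t0 + d)) / 2 = t0 by ring] at this
  have h2 := hmax _ hb
  have h3 : g (t0 - d) = g t1 := le_antisymm (hmax _ ha) (by linarith)
  have := hmin ⟨ha, h3⟩
  linarith

lemma exists_isPt {X : Type*} [MetricSpace X] (hX : IsCAT0 X) (p x : X) (l : ℝ)
    (hl0 : 0 ≤ l) (hl1 : l ≤ 1) : ∃ z, IsPt p x l z := by
  obtain ⟨γ, h0, h1, hγ⟩ := hX.1 p x
  set L := dist p x with hL
  have hLn : 0 ≤ L := dist_nonneg
  have m0 : (0:ℝ) ∈ Icc 0 L := ⟨le_rfl, hLn⟩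
  have m1 : L ∈ Icc 0 L := ⟨hLn, le_rfl⟩
  have ml : l * L ∈ Icc 0 L := ⟨by positivity, by nlinarith⟩
  refine ⟨γ (l * L), ?_, ?_, fun u => ?_⟩
  · have := hγ _ m0 _ ml
    rwa [h0, zero_sub, abs_neg, abs_of_nonneg ml.1] at this
  · have := hγ _ ml _ m1
    rw [h1, abs_sub_comm, abs_of_nonneg (by linarith [ml.2])] at this
    rw [this]; ring
  · rcases hLn.eq_or_lt with hz | hpos
    · have hpx : p = x := dist_eq_zero.mp (by rw [← hL, ← hz])
      rw [← hz, mul_zero, h0, ← hpx, dist_self]; nlinarith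
    · have hcγ : ContinuousOn γ (Icc 0 L) := by
        rw [Metric.continuousOn_iff]
        intro s hs e he
        refine ⟨e, he, fun t ht hts => ?_⟩
        rw [hγ t ht s hs]; rwa [Real.dist_eq] at hts
      have key := midconvex_aux
        (fun t => dist u (γ t) ^ 2 - t ^ 2 - dist u p ^ 2
          - t * ((dist u x ^ 2 - dist u p ^ 2 - L ^ 2) / L)) L hLn
        (by
          have : ContinuousOn (fun t => dist u (γ t)) (Icc 0 L) := 
            (continuous_const.dist continuous_id).comp_continuousOn hcγ
          fun_prop)
        (by simp [h0])
        (by simp only [h1]; field_simp; linarith)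
        (by
          intro s hs t ht
          have hst : (s + t) / 2 ∈ Icc 0 L := ⟨by linarith [hs.1, ht.1], by linarith [hs.2, ht.2]⟩
          have := hX.2 u (γ s) (γ t) (γ ((s + t) / 2))
            (by rw [hγ _ hs _ hst, hγ _ hs _ ht, show s - (s + t) / 2 = (s - t) / 2 by ring,
                  abs_div, abs_two])
            (by rw [hγ _ hst _ ht, hγ _ hs _ ht, show (s + t) / 2 - t = (s - t) / 2 by ring,
                  abs_div, abs_two])
          rw [hγ _ hs _ ht, sq_abs] at this
          generalize (dist u x ^ 2 - dist u p ^ 2 - L ^ 2) / L = A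
          nlinarith) (l * L) ml
      rw [show l * L * ((dist u x ^ 2 - dist u p ^ 2 - L ^ 2) / L)
        = l * (dist u x ^ 2 - dist u p ^ 2 - L ^ 2) by field_simp] at key
      nlinarith

lemma isPt_thales {X : Type*} [MetricSpace X] {q x y x' y' : X} {l : ℝ}
    (hl0 : 0 ≤ l) (hx : IsPt q x l x') (hy : IsPt q y l y') :
    dist x' y' ≤ l * dist x y := by
  have h1 := hx.2.2 y
  have h2 := hy.2.2 x'
  rw [dist_comm x' q, hx.1, dist_comm x' y] at h2
  rw [dist_comm y q, dist_comm y x] at h1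
  have h3 := mul_le_mul_of_nonneg_left h1 hl0
  exact abs_le_of_sq_le_sq' (by nlinarith) (by positivity) |>.2

lemma isPt_convex {X : Type*} [MetricSpace X] (hX : IsCAT0 X) {p q x y x' y' : X} {l : ℝ}
    (hl0 : 0 ≤ l) (hl1 : l ≤ 1) (hx : IsPt p x l x') (hy : IsPt q y l y') :
    dist x' y' ≤ l * dist x y + (1 - l) * dist p q := by
  obtain ⟨z, hz⟩ := exists_isPt hX q x l hl0 hl1
  have h1 := isPt_thales hl0 hz hy
  have h2 := isPt_thales (by linarith) hx.symm hz.symm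
  have := dist_triangle x' z y'
  linarith

lemma exists_mid_pt {X : Type*} [MetricSpace X] (hX : IsCAT0 X) (x y : X) (r s : ℝ)
    (hr : 0 ≤ r) (hs : 0 ≤ s) (h : dist x y ≤ r + s) :
    ∃ w, dist x w ≤ r ∧ dist w y ≤ s := by
  rcases le_or_gt (dist x y) r with h' | h'
  · exact ⟨y, h', by simpa using hs⟩
  · have hd : 0 < dist x y := by linarith
    obtain ⟨w, h1, h2, -⟩ := exists_isPt hX x y (r / dist x y) (by positivity)
      (by rw [div_le_one hd]; exact h'.le)
    refine ⟨w, ?_, ?_⟩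
    · rw [h1]; field_simp; rfl
    · rw [h2, sub_mul, div_mul_cancel₀ _ hd.ne']; linarith

section ray
variable {X : Type*} [MetricSpace X] (hX : IsCAT0 X) {b : ℝ → X} (hb : IsGeodesicRay b)
  {π : X → X} (hπ : IsProj b π)

lemma proj_pyth (hX : IsCAT0 X) (hb : IsGeodesicRay b) (hπ : IsProj b π) (x q : X)
    (hq : q ∈ rayIm b) :
    infDist x (rayIm b) ^ 2 + dist (π x) q ^ 2 / 2 ≤ dist x q ^ 2 := by
  obtain ⟨hp, hd⟩ := hπ x
  obtain ⟨s, hs, hsp⟩ := hp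
  obtain ⟨t, ht, rfl⟩ := hq
  have hs : (0:ℝ) ≤ s := hs
  have ht : (0:ℝ) ≤ t := ht
  have hst : 0 ≤ (s + t) / 2 := by linarith
  have := hX.2 x (b s) (b t) (b ((s + t) / 2))
    (by rw [hb _ _ hs hst, hb _ _ hs ht, show s - (s + t) / 2 = (s - t) / 2 by ring,
          abs_div, abs_two])
    (by rw [hb _ _ hst ht, hb _ _ hs ht, show (s + t) / 2 - t = (s - t) / 2 by ring,
          abs_div, abs_two])
  rw [hsp, hd] at this
  have h2 : infDist x (rayIm b) ≤ dist x (b ((s + t) / 2)) :=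
    infDist_le_dist_of_mem ⟨_, hst, rfl⟩
  have h3 : infDist x (rayIm b) ^ 2 ≤ dist x (b ((s + t) / 2)) ^ 2 :=
    pow_le_pow_left₀ infDist_nonneg h2 2
  linarith

lemma proj_near (hX : IsCAT0 X) (hb : IsGeodesicRay b) (hπ : IsProj b π) (w y : X) :
    dist (π w) (π y) ^ 2 ≤ 8 * infDist y (rayIm b) * dist w y + 8 * dist w y ^ 2 := by
  have h1 := proj_pyth hX hb hπ w (π y) (hπ y).1
  have h2 := dist_triangle w y (π y)
  rw [(hπ y).2] at h2
  have h3 : infDist y (rayIm b) ≤ infDist w (rayIm b) + dist y w := infDist_le_infDist_add_dist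
  rw [dist_comm y w] at h3
  have e0 : 0 ≤ dist w y := dist_nonneg
  have i0 : 0 ≤ infDist w (rayIm b) := infDist_nonneg
  have j0 : 0 ≤ infDist y (rayIm b) := infDist_nonneg
  have h4 : dist w (π y) ^ 2 ≤ (dist w y + infDist y (rayIm b)) ^ 2 :=
    pow_le_pow_left₀ dist_nonneg h2 2
  rcases le_total (infDist y (rayIm b)) (dist w y) with h5 | h5
  · nlinarith
  · have h6 : (infDist y (rayIm b) - dist w y) ^ 2 ≤ infDist w (rayIm b) ^ 2 :=
      pow_le_pow_left₀ (by linarith) (by linarith) 2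
    nlinarith

/-- A point on the segment from the projection to the point has the same projection. -/
lemma proj_pt (hX : IsCAT0 X) (hb : IsGeodesicRay b) (hπ : IsProj b π) {x z : X} {l : ℝ}
    (hz : IsPt (π x) x l z) :
    π z = π x ∧ infDist z (rayIm b) = l * infDist x (rayIm b) := by
  have h1 := hz.1
  have h2 := hz.2.1
  rw [dist_comm (π x) x, (hπ x).2] at h1 h2
  have h3 : infDist x (rayIm b) ≤ infDist z (rayIm b) + dist x z := infDist_le_infDist_add_dist
  have h4 : infDist z (rayIm b) ≤ dist z (π x) := infDist_le_dist_of_mem (hπ x).1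
  rw [dist_comm z] at h4
  rw [dist_comm x z] at h3
  have h5 : infDist z (rayIm b) = l * infDist x (rayIm b) := by linarith
  refine ⟨?_, h5⟩
  have h6 := proj_pyth hX hb hπ z (π x) (hπ x).1
  rw [dist_comm z, h1, h5] at h6
  have : dist (π z) (π x) ^ 2 = 0 := le_antisymm (by linarith) (sq_nonneg _)
  exact dist_eq_zero.mp (pow_eq_zero_iff (two_ne_zero) |>.mp this)

end ray

lemma kappa_double {κ : ℝ → ℝ} (hκ : IsSublinearFn κ) {t : ℝ} (ht : 0 ≤ t) :
    κ (2 * t) ≤ 2 * κ t := by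
  have := hκ.concave.2 (show (0:ℝ) ∈ Ici 0 from self_mem_Ici)
    (show 2 * t ∈ Ici (0:ℝ) from by simpa using ht)
    (show (0:ℝ) ≤ 1/2 by norm_num) (show (0:ℝ) ≤ 1/2 by norm_num) (by norm_num)
  simp only [smul_eq_mul] at this
  rw [show (1/2:ℝ) * 0 + 1/2 * (2 * t) = t by ring] at this
  linarith [hκ.one_le 0]

lemma kappa_add {κ : ℝ → ℝ} (hκ : IsSublinearFn κ) {s t : ℝ} (hs : 0 ≤ s) (ht : 0 ≤ t) :
    κ (s + t) ≤ 2 * κ s + 2 * κ t := by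
  rcases le_total s t with h | h
  · have := hκ.mono (show s + t ≤ 2 * t by linarith)
    linarith [kappa_double hκ ht, hκ.one_le s]
  · have := hκ.mono (show s + t ≤ 2 * s by linarith)
    linarith [kappa_double hκ hs, hκ.one_le t]

lemma kappa_lin {κ : ℝ → ℝ} (hκ : IsSublinearFn κ) {e : ℝ} (he : 0 < e) :
    ∃ M, 0 ≤ M ∧ ∀ t, 0 ≤ t → κ t ≤ e * t + M := by
  have h := hκ.sublinear.eventually (gt_mem_nhds he)
  obtain ⟨T, hT⟩ := (h.and (eventually_gt_atTop 0)).exists_forall_of_atTop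
  refine ⟨κ T, by linarith [hκ.one_le T], fun t ht => ?_⟩
  rcases le_total T t with h' | h'
  · obtain ⟨h1, h2⟩ := hT t h'
    rw [div_lt_iff₀ h2] at h1
    linarith [hκ.one_le T]
  · have := hκ.mono h'
    nlinarith

lemma kappa_close {κ : ℝ → ℝ} (hκ : IsSublinearFn κ) {C N : ℝ} (hC : 0 < C) (hN : 0 < N) :
    ∃ C' > 0, ∀ a D, 0 ≤ a → 0 ≤ D → D ≤ C * κ (a + N * D) → D ≤ C' * κ a := by
  obtain ⟨M, hM0, hM⟩ := kappa_lin hκ (show 0 < 1 / (4 * C * N) by positivity)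
  refine ⟨4 * C * (1 + M), by positivity, fun a D ha hD h => ?_⟩
  have h1 := kappa_add hκ ha (show 0 ≤ N * D by positivity)
  have h2 := hM (N * D) (by positivity)
  rw [show 1 / (4 * C * N) * (N * D) = D / (4 * C) by field_simp] at h2
  have h3 : C * κ (a + N * D) ≤ C * (2 * κ a + 2 * (D / (4 * C) + M)) :=
    mul_le_mul_of_nonneg_left (by linarith) hC.le
  rw [show C * (2 * κ a + 2 * (D / (4 * C) + M)) = 2 * C * κ a + D / 2 + 2 * C * M by
    field_simp; ring] at h3
  have h4 : 0 ≤ C * M * (κ a - 1) := by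
    have := hκ.one_le a
    have : 0 ≤ κ a - 1 := by linarith
    positivity
  nlinarith

lemma forward_main {X : Type*} [MetricSpace X] (hX : IsCAT0 X)
    (o : X) (κ : ℝ → ℝ) (hκ : IsSublinearFn κ)
    (b : ℝ → X) (hb : IsGeodesicRay b)
    (π : X → X) (hπ : IsProj b π) (c : ℝ) (hc : 0 ≤ c)
    (H : ∀ x y : X, dist x y ≤ infDist x (rayIm b) → dist (π x) (π y) ≤ c * κ (dist o x))
    (x y : X) (hxy : dist x y < infDist x (rayIm b)) :
    dist (π x) (π y) ≤
      2 * c * κ (dist o (π x) + 450 * dist (π x) (π y)) := by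
  set D := dist (π x) (π y) with hD
  set R := infDist x (rayIm b) with hR
  set h := infDist y (rayIm b) with hh
  set a := dist o (π x) with ha
  have D0 : 0 ≤ D := dist_nonneg
  have h0 : 0 ≤ h := infDist_nonneg
  have R0 : 0 < R := lt_of_le_of_lt dist_nonneg hxy
  have a0 : 0 ≤ a := dist_nonneg
  have hxp : dist x (π x) = R := (hπ x).2
  have hyq : dist y (π y) = h := (hπ y).2
  have K1 := hκ.one_le (a + 450 * D)
  have hmono : ∀ t, t ≤ a + 450 * D → c * κ t ≤ c * κ (a + 450 * D) := fun t ht =>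
    mul_le_mul_of_nonneg_left (hκ.mono ht) hc
  have cK : 0 ≤ c * κ (a + 450 * D) := by positivity
  rcases D0.eq_or_lt with hD0 | Dpos
  · rw [← hD0] at cK ⊢; linarith
  have hyp : dist y (π x) ≤ D + h := by
    have := dist_triangle y (π y) (π x)
    rw [dist_comm (π y)] at this; linarith
  have hyp2 : dist y (π x) ^ 2 ≤ (D + h) ^ 2 := pow_le_pow_left₀ dist_nonneg hyp 2
  have hxy2 : dist y x ^ 2 ≤ R ^ 2 := by
    rw [dist_comm]; exact pow_le_pow_left₀ dist_nonneg hxy.le 2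
  -- points on the segment from `π x` to `x`
  have low : ∀ r, 0 ≤ r → r ≤ R → ∃ x', π x' = π x ∧ infDist x' (rayIm b) = r ∧
      dist x' y ^ 2 ≤ r ^ 2 + (D + h) ^ 2 := by
    intro r hr hrR
    have hm1 : r / R ≤ 1 := by rwa [div_le_one R0]
    have hm0 : 0 ≤ r / R := by positivity
    obtain ⟨x', hx'⟩ := exists_isPt hX (π x) x (r / R) hm0 hm1
    obtain ⟨e1, e2⟩ := proj_pt hX hb hπ hx'
    refine ⟨x', e1, ?_, ?_⟩
    · rw [e2]; exact div_mul_cancel₀ _ R0.ne'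
    · have := hx'.2.2 y
      rw [dist_comm (π x) x, hxp, dist_comm y x'] at this
      have er : r = r / R * R := (div_mul_cancel₀ _ R0.ne').symm
      have er2 : r ^ 2 = (r / R) ^ 2 * R ^ 2 := by rw [← mul_pow, ← er]
      rw [er2]
      generalize r / R = m at *
      nlinarith [mul_le_mul_of_nonneg_left hxy2 hm0, mul_nonneg hm0 (sq_nonneg (D + h)),
        mul_le_mul_of_nonneg_left hyp2 (sub_nonneg.mpr hm1)]
  have norm_le : ∀ z, dist o z ≤ dist o (π z) + infDist z (rayIm b) := by
    intro z
    rw [← (hπ z).2, dist_comm z]; exact dist_triangle _ _ _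
  rcases le_or_gt h (2 * D) with hcase | hcase
  · rcases le_or_gt R (450 * D) with hR' | hR'
    · have h1 := H x y hxy.le
      have h2 := hmono (dist o x) (by linarith [norm_le x])
      linarith
    · obtain ⟨x', e1, e2, e3⟩ := low (450 * D) (by positivity) hR'.le
      have e4 : dist x' y ≤ 450 * D + D / 100 :=
        abs_le_of_sq_le_sq' (by nlinarith) (by positivity) |>.2
      obtain ⟨w, hw1, hw2⟩ := exists_mid_pt hX x' y _ _ (by positivity) (by positivity) e4
      have h1 := H x' w (by rw [e2]; exact hw1)
      have h2 := hmono (dist o x') (by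
        have := norm_le x'
        rw [e1, e2] at this; exact this)
      have h3 := proj_near hX hb hπ w y
      have h4 : dist (π w) (π y) ≤ D / 2 := by
        refine abs_le_of_sq_le_sq' ?_ (by positivity) |>.2
        have w0 : 0 ≤ dist w y := dist_nonneg
        have h5 : h * dist w y ≤ (2 * D) * (D / 100) := by gcongr
        have h6 : dist w y ^ 2 ≤ (D / 100) ^ 2 := by gcongr
        nlinarith
      rw [e1] at h1
      have h5 := dist_triangle (π x) (π w) (π y)
      linarith
  · have hpos : 0 < h := by linarith
    have : ∃ x', π x' = π x ∧ infDist x' (rayIm b) ≤ 4 * h ∧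
        dist x' y ≤ infDist x' (rayIm b) + h / 2 := by
      rcases le_or_gt R (4 * h) with hR' | hR'
      · exact ⟨x, rfl, hR', by linarith⟩
      · obtain ⟨x', e1, e2, e3⟩ := low (4 * h) (by positivity) hR'.le
        refine ⟨x', e1, e2.le, ?_⟩
        rw [e2]
        exact abs_le_of_sq_le_sq' (by nlinarith) (by positivity) |>.2
    obtain ⟨x', e1, e2, e3⟩ := this
    set l := 2 * D / h with hl
    have l0 : 0 ≤ l := by positivity
    have l1 : l ≤ 1 := by rw [hl, div_le_one hpos]; exact hcase.le
    have lh : l * h = 2 * D := div_mul_cancel₀ _ hpos.ne'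
    obtain ⟨u, hu⟩ := exists_isPt hX (π x') x' l l0 l1
    obtain ⟨v, hv⟩ := exists_isPt hX (π y) y l l0 l1
    have huv := isPt_convex hX l0 l1 hu hv
    obtain ⟨u1, u2⟩ := proj_pt hX hb hπ hu
    obtain ⟨v1, v2⟩ := proj_pt hX hb hπ hv
    rw [← hh, lh] at v2
    rw [e1, ← hD] at huv
    have g1 : l * dist x' y ≤ l * (infDist x' (rayIm b) + h / 2) :=
      mul_le_mul_of_nonneg_left e3 l0
    have g2 : l * infDist x' (rayIm b) ≤ l * (4 * h) := mul_le_mul_of_nonneg_left e2 l0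
    have g3 : 0 ≤ l * D := by positivity
    have huv' : dist u v ≤ infDist u (rayIm b) + infDist v (rayIm b) := by
      rw [u2, v2]; linarith
    obtain ⟨w, hw1, hw2⟩ := exists_mid_pt hX u v _ _ infDist_nonneg infDist_nonneg huv'
    have k1 := H u w hw1
    have k2 := H v w (by rw [dist_comm]; exact hw2)
    have n1 := norm_le u
    have n2 := norm_le v
    rw [u1, e1, u2] at n1
    rw [v1, v2] at n2
    have n3 : dist o (π y) ≤ a + D := dist_triangle _ _ _
    have k3 := hmono (dist o u) (by linarith)
    have k4 := hmono (dist o v) (by linarith)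
    rw [u1, e1] at k1
    rw [v1, dist_comm] at k2
    have := dist_triangle (π x) (π w) (π y)
    linarith

/-- Lemma 2.6. In a proper CAT(0) space, a geodesic ray `b` is
`κ`-contracting iff there is `c > 0` such that `d(x,y) < d(x,b)` implies
`d(x_b, y_b) ≤ c·κ(‖x_b‖)`. -/
theorem kappaContracting_iff_proj_form
    {X : Type*} [MetricSpace X] [ProperSpace X] (hX : IsCAT0 X)
    (o : X) (κ : ℝ → ℝ) (hκ : IsSublinearFn κ)
    (b : ℝ → X) (hb : IsGeodesicRay b) (hb0 : b 0 = o)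
    (π : X → X) (hπ : IsProj b π) :
    KappaContracting κ o b π ↔
      ∃ c > (0:ℝ), ∀ x y : X, dist x y < infDist x (rayIm b) →
        dist (π x) (π y) ≤ c * κ (dist o (π x)) := by
  constructor
  · rintro ⟨c, hc, H⟩
    obtain ⟨C', hC', hcl⟩ := kappa_close hκ (show 0 < 2 * (c + 1) by positivity)
      (show (0:ℝ) < 450 by norm_num)
    refine ⟨C', hC', fun x y hxy => hcl _ _ dist_nonneg dist_nonneg ?_⟩
    exact forward_main hX o κ hκ b hb π hπ (c + 1) (by positivity)
      (fun x y h => (H x y h).trans (by nlinarith [hκ.one_le (dist o x)])) x y hxy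
  · rintro ⟨c, hc, H⟩
    refine ⟨2 * c + 1, by positivity, fun x y hxy => ?_⟩
    have K1 := hκ.one_le (dist o x)
    have hpx : dist o (π x) ≤ 2 * dist o x := by
      have := proj_pyth hX hb hπ x o ⟨0, self_mem_Ici, hb0⟩
      rw [dist_comm (π x), dist_comm x] at this
      refine abs_le_of_sq_le_sq' ?_ (by positivity) |>.2
      nlinarith [sq_nonneg (infDist x (rayIm b)), sq_nonneg (dist o x)]
    have hk : c * κ (dist o (π x)) ≤ c * (2 * κ (dist o x)) :=
      mul_le_mul_of_nonneg_left ((hκ.mono hpx).trans (kappa_double hκ dist_nonneg)) hc.le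
    rcases (dist_nonneg (x := x) (y := y)).eq_or_lt with hz | hpos
    · have K0 : 0 ≤ κ (dist o x) := by linarith
      rw [← dist_eq_zero.mp hz.symm, dist_self]; positivity
    set h := infDist y (rayIm b) with hh
    have h0 : 0 ≤ h := infDist_nonneg
    set e := min (dist x y) (1 / (16 * (h + 1))) with he
    have e0 : 0 < e := lt_min hpos (by positivity)
    have e1 : e ≤ dist x y := min_le_left _ _
    have e2 : e ≤ 1 / (16 * (h + 1)) := min_le_right _ _
    obtain ⟨w, hw1, hw2⟩ := exists_mid_pt hX x y (dist x y - e) e (by linarith) e0.le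
      (by linarith)
    have h1 := H x w (by linarith)
    have h2 := proj_near hX hb hπ w y
    have h3 : dist (π w) (π y) ≤ 1 := by
      refine abs_le_of_sq_le_sq' ?_ (by positivity) |>.2
      rw [le_div_iff₀ (by positivity)] at e2
      have w0 : 0 ≤ dist w y := dist_nonneg
      have h5 : h * dist w y ≤ h * e := by gcongr
      have h6 : dist w y ^ 2 ≤ e ^ 2 := by gcongr
      have h7 : e ≤ 1 := by nlinarith
      nlinarith
    have := dist_triangle (π x) (π w) (π y)
    nlinarith
end
end

section
/- Let b be a geodesic ray in a proper CAT(0) space. If the κ-lower divergence of b is superlinear, i.e. div_κ(r)/r → ∞ as r → ∞, then b is κ-slim (satisfies κ-slim condition 4, and hence all four κ-slim conditions). -/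
open Set Metric Filter ENNReal

noncomputable section

/-- κ-slim condition 1: `d(x_b, [x,y]) ≤ c·κ(‖x_b‖)` for all `x ∈ X`, `y ∈ im(b)`. -/
def SlimCond1 {X : Type*} [MetricSpace X] (κ : ℝ → ℝ) (o : X) (b : ℝ → X) (π : X → X) : Prop :=
  ∃ c ≥ (0:ℝ), ∀ x : X, ∀ y ∈ rayIm b, infDist (π x) (seg x y) ≤ c * κ (dist o (π x))

/-- κ-slim condition 2: `d(x_b, [x,y]) ≤ c·κ(‖z‖)` for some `z` on `b` between `x_b` and `y`. -/
def SlimCond2 {X : Type*} [MetricSpace X] (κ : ℝ → ℝ) (o : X) (b : ℝ → X) (π : X → X) : Prop :=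
  ∃ c ≥ (0:ℝ), ∀ x : X, ∀ y ∈ rayIm b, ∃ z ∈ rayIm b ∩ seg (π x) y,
    infDist (π x) (seg x y) ≤ c * κ (dist o z)

/-- κ-slim condition 3: for `x y z` with `[y,z] ⊆ im(b)` and `w ∈ [y,z]`,
`d(w, [y,x] ∪ [x,z]) ≤ c·κ(‖x_b‖)`. -/
def SlimCond3 {X : Type*} [MetricSpace X] (κ : ℝ → ℝ) (o : X) (b : ℝ → X) (π : X → X) : Prop :=
  ∃ c ≥ (0:ℝ), ∀ x y z : X, seg y z ⊆ rayIm b →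
    ∀ w ∈ seg y z, infDist w (seg y x ∪ seg x z) ≤ c * κ (dist o (π x))

/-- κ-slim condition 4: for `x ∈ X` and `[y,z] ⊆ im(b)` with `‖y‖ ≤ ‖x_b‖ ≤ ‖z‖` and
`w ∈ [y,z]`, `d(w, [y,x] ∪ [x,z]) ≤ c·κ(‖z‖)`. -/
def SlimCond4 {X : Type*} [MetricSpace X] (κ : ℝ → ℝ) (o : X) (b : ℝ → X) (π : X → X) : Prop :=
  ∃ c ≥ (0:ℝ), ∀ x y z : X, seg y z ⊆ rayIm b →
    dist o y ≤ dist o (π x) → dist o (π x) ≤ dist o z →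
    ∀ w ∈ seg y z, infDist w (seg y x ∪ seg x z) ≤ c * κ (dist o z)

/-- The set of (continuous, rectifiable-or-not) paths from `b(t - r·κ(t))` to
`b(t + r·κ(t))` avoiding the open ball of radius `r·κ(t)` about `b(t)`. -/
def pathsOutside {X : Type*} [MetricSpace X] (κ : ℝ → ℝ) (b : ℝ → X) (r t : ℝ) :
    Set (ℝ → X) :=
  {γ | ContinuousOn γ (Icc 0 1) ∧ γ 0 = b (t - r * κ t) ∧ γ 1 = b (t + r * κ t) ∧
       ∀ s ∈ Icc (0:ℝ) 1, γ s ∉ ball (b t) (r * κ t)}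

/-- `ρ_κ(r,t)`: the infimum of the lengths of paths from `b(t - r·κ(t))` to
`b(t + r·κ(t))` lying outside the open ball of radius `r·κ(t)` about `b(t)`
(`∞` if there is no such path). -/
noncomputable def rhoKappa {X : Type*} [MetricSpace X] (κ : ℝ → ℝ) (b : ℝ → X)
    (r t : ℝ) : ℝ≥0∞ :=
  ⨅ γ ∈ pathsOutside κ b r t, eVariationOn γ (Icc 0 1)

/-- The κ-lower divergence `div_κ(r) = inf_{t > r·κ(t)} ρ_κ(r,t)/κ(t)`. -/
noncomputable def divKappa {X : Type*} [MetricSpace X] (κ : ℝ → ℝ) (b : ℝ → X)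
    (r : ℝ) : ℝ≥0∞ :=
  ⨅ t ∈ {t : ℝ | r * κ t < t}, rhoKappa κ b r t / ENNReal.ofReal (κ t)

lemma cat0_geod_stewart {X : Type*} [MetricSpace X] (hX : IsCAT0 X) (x : X) (γ : ℝ → X) (L : ℝ)
    (hL : 0 ≤ L)
    (hγ : ∀ s ∈ Icc (0:ℝ) L, ∀ t ∈ Icc (0:ℝ) L, dist (γ s) (γ t) = |s - t|)
    (s : ℝ) (hs : s ∈ Icc (0:ℝ) L) :
    L * dist x (γ s) ^ 2 ≤ (L - s) * dist x (γ 0) ^ 2 + s * dist x (γ L) ^ 2 - s * (L - s) * L := by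
  set f : ℝ → ℝ := fun s => L * dist x (γ s) ^ 2 -
    ((L - s) * dist x (γ 0) ^ 2 + s * dist x (γ L) ^ 2 - s * (L - s) * L) with hf
  have hγc : ContinuousOn γ (Icc 0 L) := by
    have : LipschitzOnWith 1 γ (Icc 0 L) := by
      apply LipschitzOnWith.of_dist_le_mul
      intro a ha c hc
      rw [hγ a ha c hc, Real.dist_eq]; simp
    exact this.continuousOn
  have hfc : ContinuousOn f (Icc 0 L) := by
    have h1 : ContinuousOn (fun s => dist x (γ s)) (Icc 0 L) :=
      (continuous_const.dist continuous_id).comp_continuousOn hγc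
    simp only [hf]
    fun_prop
  have hmid : ∀ a h : ℝ, 0 ≤ h → a - h ∈ Icc 0 L → a + h ∈ Icc 0 L →
      f a ≤ (f (a - h) + f (a + h)) / 2 := by
    intro a h hh h1 h2
    have ha : a ∈ Icc 0 L := ⟨by linarith [h1.1], by linarith [h2.2]⟩
    have e0 : dist (γ (a-h)) (γ (a+h)) = 2 * h := by
      rw [hγ _ h1 _ h2, show a - h - (a + h) = -(2*h) by ring, abs_neg, abs_of_nonneg (by linarith)]
    have e1 : dist (γ (a-h)) (γ a) = dist (γ (a-h)) (γ (a+h)) / 2 := by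
      rw [e0, hγ _ h1 _ ha, show a - h - a = -h by ring, abs_neg, abs_of_nonneg hh]; ring
    have e2 : dist (γ a) (γ (a+h)) = dist (γ (a-h)) (γ (a+h)) / 2 := by
      rw [e0, hγ _ ha _ h2, show a - (a + h) = -h by ring, abs_neg, abs_of_nonneg hh]; ring
    have := hX.2 x _ _ _ e1 e2
    rw [e0] at this
    have := mul_le_mul_of_nonneg_left this hL
    simp only [hf]
    nlinarith
  have hf0 : f 0 = 0 := by simp [hf]
  have hfL : f L = 0 := by simp [hf]
  have hmax : f s ≤ 0 := by
    by_contra! hpos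
    obtain ⟨c, hc, hcmax⟩ := isCompact_Icc.exists_isMaxOn ⟨s, hs⟩ hfc
    have hcpos : 0 < f c := lt_of_lt_of_le hpos (hcmax hs)
    set A : Set ℝ := Icc 0 L ∩ f ⁻¹' {f c} with hA
    have hAcl : IsClosed A := hfc.preimage_isClosed_of_isClosed isClosed_Icc isClosed_singleton
    have hAco : IsCompact A := isCompact_Icc.of_isClosed_subset hAcl inter_subset_left
    obtain ⟨a, haA, hamin⟩ := hAco.exists_isLeast ⟨c, hc, rfl⟩
    have haf : f a = f c := haA.2
    have ha0 : a ≠ 0 := by rintro rfl; linarith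
    have haL : a ≠ L := by rintro rfl; linarith
    have h0 : 0 < a := lt_of_le_of_ne haA.1.1 (Ne.symm ha0)
    have h1 : a < L := lt_of_le_of_ne haA.1.2 haL
    have hh : 0 < min a (L - a) := lt_min h0 (by linarith)
    have hh1 := min_le_left a (L - a)
    have hh2 := min_le_right a (L - a)
    set h := min a (L - a)
    have m1 : a - h ∈ Icc 0 L := ⟨by linarith, by linarith⟩
    have m2 : a + h ∈ Icc 0 L := ⟨by linarith, by linarith⟩
    have k := hmid a h hh.le m1 m2
    have k1 : f (a - h) ≤ f c := hcmax m1
    have k2 : f (a + h) ≤ f c := hcmax m2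
    have k3 : f (a - h) = f c := by linarith
    have := hamin ⟨m1, k3⟩
    linarith
  simp only [hf] at hmax
  linarith

lemma cat0_stewart {X : Type*} [MetricSpace X] (hX : IsCAT0 X) (x y z m : X) (l : ℝ)
    (h0 : 0 ≤ l) (h1 : l ≤ 1) (hy : dist y m = l * dist y z) (hz : dist m z = (1 - l) * dist y z) :
    dist x m ^ 2 ≤ (1 - l) * dist x y ^ 2 + l * dist x z ^ 2 - l * (1 - l) * dist y z ^ 2 := by
  obtain ⟨γ, g0, g1, hγ⟩ := hX.1 y z
  have hL : 0 ≤ dist y z := dist_nonneg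
  rcases hL.eq_or_lt with h | h
  · have : y = z := dist_eq_zero.1 h.symm
    subst this
    have : y = m := by simpa using hy
    subst this
    simp; linarith
  set L := dist y z
  have hs : l * L ∈ Icc 0 L := ⟨by positivity, by nlinarith⟩
  have key : ∀ w : X, dist w (γ (l * L)) ^ 2 ≤
      (1 - l) * dist w y ^ 2 + l * dist w z ^ 2 - l * (1 - l) * L ^ 2 := by
    intro w
    have := cat0_geod_stewart hX w γ L hL hγ _ hs
    rw [g0, g1] at this
    have h2 : L * dist w (γ (l * L)) ^ 2 ≤
      L * ((1 - l) * dist w y ^ 2 + l * dist w z ^ 2 - l * (1 - l) * L ^ 2) := by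
      linarith
    exact le_of_mul_le_mul_left h2 h
  have hm := key m
  rw [dist_comm m y, hy, hz] at hm
  have : dist m (γ (l * L)) = 0 := by
    have : dist m (γ (l * L)) ^ 2 ≤ 0 := by nlinarith
    nlinarith [dist_nonneg (x := m) (y := γ (l * L))]
  rw [dist_eq_zero.1 this]
  exact key x

lemma cat0_thales {X : Type*} [MetricSpace X] (hX : IsCAT0 X) (z a c a' c' : X) (l : ℝ)
    (h0 : 0 ≤ l) (h1 : l ≤ 1)
    (ha : dist z a' = l * dist z a) (ha' : dist a' a = (1 - l) * dist z a)
    (hc : dist z c' = l * dist z c) (hc' : dist c' c = (1 - l) * dist z c) :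
    dist a' c' ≤ l * dist a c := by
  have k1 := cat0_stewart hX a' z c c' l h0 h1 hc hc'
  have k2 := cat0_stewart hX c z a a' l h0 h1 ha ha'
  rw [dist_comm a' z, ha] at k1
  rw [dist_comm c a', dist_comm c z, dist_comm c a] at k2
  have k3 := mul_le_mul_of_nonneg_left k2 h0
  apply abs_le_of_sq_le_sq' _ (by positivity) |>.2
  nlinarith

lemma geod_pt {X : Type*} [MetricSpace X] (hX : GeodesicSpace X) (a c : X) (l : ℝ)
    (h0 : 0 ≤ l) (h1 : l ≤ 1) : ∃ m, dist a m = l * dist a c ∧ dist m c = (1 - l) * dist a c := by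
  obtain ⟨γ, g0, g1, hγ⟩ := hX a c
  have hL : 0 ≤ dist a c := dist_nonneg
  have hs : l * dist a c ∈ Icc 0 (dist a c) := ⟨by positivity, by nlinarith⟩
  refine ⟨γ (l * dist a c), ?_, ?_⟩
  · have := hγ 0 ⟨le_rfl, hL⟩ _ hs
    rw [g0] at this
    rw [this, zero_sub, abs_neg, abs_of_nonneg hs.1]
  · have := hγ _ hs _ ⟨hL, le_rfl⟩
    rw [g1] at this
    rw [this, abs_sub_comm, abs_of_nonneg (by linarith [hs.2])]; ring

/-- 1-Lipschitz path of length `L` inside `P`. -/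
def Conn {X : Type*} [MetricSpace X] (P : Set X) (u v : X) (L : ℝ) : Prop :=
  0 ≤ L ∧ ∃ γ : ℝ → X, γ 0 = u ∧ γ L = v ∧
    (∀ s ∈ Icc (0:ℝ) L, ∀ t ∈ Icc (0:ℝ) L, dist (γ s) (γ t) ≤ |s - t|) ∧
    ∀ s ∈ Icc (0:ℝ) L, γ s ∈ P

lemma Conn.symm {X : Type*} [MetricSpace X] {P : Set X} {u v : X} {L : ℝ} (h : Conn P u v L) :
    Conn P v u L := by
  obtain ⟨hL, γ, h0, h1, h2, h3⟩ := h
  refine ⟨hL, fun s => γ (L - s), by simpa, by simpa, ?_, ?_⟩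
  · intro s hs t ht
    have := h2 (L - s) ⟨by linarith [hs.2], by linarith [hs.1]⟩ (L - t)
      ⟨by linarith [ht.2], by linarith [ht.1]⟩
    rwa [show L - s - (L - t) = -(s - t) by ring, abs_neg] at this
  · intro s hs
    exact h3 _ ⟨by linarith [hs.2], by linarith [hs.1]⟩

lemma Conn.trans {X : Type*} [MetricSpace X] {P : Set X} {u v w : X} {L M : ℝ}
    (h : Conn P u v L) (h' : Conn P v w M) : Conn P u w (L + M) := by
  obtain ⟨hL, γ, h0, h1, h2, h3⟩ := h
  obtain ⟨hM, δ, k0, k1, k2, k3⟩ := h'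
  have mixed : ∀ s ∈ Icc (0:ℝ) (L + M), ∀ t ∈ Icc (0:ℝ) (L + M), s ≤ L → ¬ t ≤ L →
      dist (γ s) (δ (t - L)) ≤ |s - t| := by
    intro s hs t ht hsL htL
    push Not at htL
    have a1 := h2 s ⟨hs.1, hsL⟩ L ⟨hL, le_rfl⟩
    have a2 := k2 0 ⟨le_rfl, hM⟩ (t - L) ⟨by linarith, by linarith [ht.2]⟩
    rw [h1] at a1
    rw [k0] at a2
    rw [abs_of_nonpos (by linarith)] at a1 a2 ⊢
    linarith [dist_triangle (γ s) v (δ (t - L))]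
  refine ⟨by linarith, fun s => if s ≤ L then γ s else δ (s - L), by simp [hL, h0], ?_, ?_, ?_⟩
  · by_cases hM0 : M = 0
    · subst hM0
      simp [h1, ← k1, k0]
    · have : 0 < M := lt_of_le_of_ne hM (Ne.symm hM0)
      have : ¬ L + M ≤ L := by linarith
      simp only [this, if_false]
      rw [add_sub_cancel_left, k1]
  · intro s hs t ht
    by_cases c1 : s ≤ L <;> by_cases c2 : t ≤ L <;> simp only [c1, c2, if_true, if_false]
    · exact h2 s ⟨hs.1, c1⟩ t ⟨ht.1, c2⟩
    · exact mixed s hs t ht c1 c2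
    · rw [dist_comm, abs_sub_comm]; exact mixed t ht s hs c2 c1
    · push Not at c1 c2
      have := k2 (s - L) ⟨by linarith, by linarith [hs.2]⟩ (t - L) ⟨by linarith, by linarith [ht.2]⟩
      simpa using this
  · intro s hs
    by_cases c1 : s ≤ L <;> simp only [c1, if_true, if_false]
    · exact h3 s ⟨hs.1, c1⟩
    · push Not at c1
      exact k3 _ ⟨by linarith, by linarith [hs.2]⟩

lemma conn_seg {X : Type*} [MetricSpace X] (hX : GeodesicSpace X) {P : Set X} {a c : X} {L : ℝ}
    (hL : dist a c ≤ L) (hP : ∀ z ∈ seg a c, z ∈ P) : Conn P a c L := by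
  obtain ⟨γ, g0, g1, hγ⟩ := hX a c
  have hd : 0 ≤ dist a c := dist_nonneg
  have hmem : ∀ s ∈ Icc (0:ℝ) L, min s (dist a c) ∈ Icc 0 (dist a c) := fun s hs =>
    ⟨le_min hs.1 hd, min_le_right _ _⟩
  refine ⟨hd.trans hL, fun s => γ (min s (dist a c)), by simp [hd, g0], by simp [hL, g1], ?_, ?_⟩
  · intro s hs t ht
    rw [hγ _ (hmem s hs) _ (hmem t ht)]
    have := abs_min_sub_min_le_max s (dist a c) t (dist a c)
    simpa using this
  · intro s hs
    apply hP
    have m := hmem s hs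
    have e1 := hγ 0 ⟨le_rfl, hd⟩ _ m
    have e2 := hγ _ m _ ⟨hd, le_rfl⟩
    rw [g0, zero_sub, abs_neg, abs_of_nonneg m.1] at e1
    rw [g1, abs_sub_comm, abs_of_nonneg (by linarith [m.2])] at e2
    simp only [seg, mem_ofPred_eq]
    linarith

lemma leg {X : Type*} [MetricSpace X] (hX : IsCAT0 X) (p q e : X) (D : ℝ) (hD : 0 < D)
    (hq : dist p q = D) (hz : ∀ z ∈ seg q e, D ≤ dist p z) :
    ∃ l, 0 ≤ l ∧ l ≤ 1 ∧ ∃ q' ∈ seg q e, dist q q' ≤ 3 * D ∧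
      ∀ e', dist e e' = l * dist e p → dist e' p = (1 - l) * dist e p →
        dist q' e' ≤ D ∧ ∀ z ∈ seg q' e', D ≤ dist p z := by
  by_cases hn : dist q e ≤ 3 * D
  · refine ⟨0, le_rfl, zero_le_one, e, by simp [seg], hn, ?_⟩
    intro e' h1 _
    have : e = e' := by simpa using h1
    subst this
    refine ⟨by simp [hD.le], ?_⟩
    intro z hz'
    have : dist e z + dist z e = 0 := by simpa [seg] using hz'
    have : dist z e = 0 := by linarith [dist_nonneg (x := e) (y := z), dist_nonneg (x := z) (y := e)]
    rw [dist_eq_zero.1 this]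
    exact hz e (by simp [seg])
  · push Not at hn
    set n := dist q e with hnn
    have hn0 : 0 < n := by linarith
    have hl0 : 0 ≤ 1 - 3 * D / n := by
      rw [sub_nonneg, div_le_one hn0]; exact hn.le
    have hl1 : 1 - 3 * D / n ≤ 1 := by
      have : 0 ≤ 3 * D / n := by positivity
      linarith
    have hln : (1 - (1 - 3 * D / n)) * n = 3 * D := by field_simp; ring
    set l := 1 - 3 * D / n
    obtain ⟨q', a1, a2⟩ := geod_pt hX.1 e q l hl0 hl1
    have a3 := a2
    rw [dist_comm e q, ← hnn] at a3
    rw [hln] at a3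
    have a4 := a1
    rw [dist_comm e q, ← hnn] at a4
    refine ⟨l, hl0, hl1, q', ?_, ?_, ?_⟩
    · simp only [seg, mem_ofPred_eq]
      rw [dist_comm q q', dist_comm q' e, ← hnn]
      linarith
    · rw [dist_comm]; exact a3.le
    · intro e' b1 b2
      have t := cat0_thales hX e q p q' e' l hl0 hl1 a1 a2 b1 b2
      have t2 : dist q' e' ≤ D := by
        rw [dist_comm q p, hq] at t
        nlinarith
      refine ⟨t2, ?_⟩
      intro z hz'
      simp only [seg, mem_ofPred_eq] at hz'
      have := dist_triangle q p q'
      have := dist_triangle p z q'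
      rw [dist_comm q' q] at a3
      rw [dist_comm q p] at *
      have := dist_nonneg (x := z) (y := e')
      have := dist_comm z q'
      linarith

lemma main_conn {X : Type*} [MetricSpace X] [ProperSpace X] (hX : IsCAT0 X) (p x y : X) (D : ℝ)
    (hD : 0 < D) (hDe : infDist p (seg x y) = D) (g : ℝ → X) (L : ℝ) (hL : dist p y = L)
    (g0 : g 0 = p) (g1 : g L = y)
    (hg : ∀ s ∈ Icc (0:ℝ) L, ∀ t ∈ Icc (0:ℝ) L, dist (g s) (g t) = |s - t|)
    (hx : ∀ s ∈ Icc (0:ℝ) L, dist x p ≤ dist x (g s)) :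
    D ≤ L ∧ Conn {z | D / 4 ≤ dist z (g (D / 2))} (g (D / 4)) (g (3 * D / 4)) (19 * D) := by
  have hfar : ∀ z ∈ seg x y, D ≤ dist p z := fun z hz => hDe ▸ infDist_le_dist_of_mem hz
  have hDL : D ≤ L := hL ▸ hfar y (by simp [seg])
  refine ⟨hDL, ?_⟩
  have hcl : IsClosed (seg x y) := by
    unfold seg
    exact isClosed_eq (by fun_prop) (by fun_prop)
  obtain ⟨q, hqs, hq⟩ := hcl.exists_infDist_eq_dist ⟨x, by simp [seg]⟩ p
  rw [hDe] at hq
  have hqs' : dist x q + dist q y = dist x y := hqs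
  obtain ⟨l, hl0, hl1, qx, hqx, hqx3, Hx⟩ := leg hX p q x D hD hq.symm (by
    intro z hz
    apply hfar
    simp only [seg, mem_ofPred_eq] at hz ⊢
    have := dist_triangle x z y
    have := dist_triangle z q y
    have := dist_comm q x
    have := dist_comm z x
    have := dist_comm z q
    linarith)
  obtain ⟨k, hk0, hk1, qy, hqy, hqy3, Hy⟩ := leg hX p q y D hD hq.symm (by
    intro z hz
    apply hfar
    simp only [seg, mem_ofPred_eq] at hz ⊢
    have := dist_triangle x z y
    have := dist_triangle x q z
    linarith)
  obtain ⟨x', hx1, hx2⟩ := geod_pt hX.1 x p l hl0 hl1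
  obtain ⟨Hx1, Hx2⟩ := Hx x' hx1 hx2
  have hL0 : 0 ≤ L := by linarith
  have hsL : (1 - k) * L ∈ Icc 0 L := ⟨mul_nonneg (by linarith) hL0, by nlinarith⟩
  have hgp : ∀ s ∈ Icc 0 L, dist p (g s) = s := by
    intro s hs
    rw [← g0, hg 0 ⟨le_rfl, hL0⟩ s hs, zero_sub, abs_neg, abs_of_nonneg hs.1]
  have hy1 : dist y (g ((1 - k) * L)) = k * dist y p := by
    rw [dist_comm y p, hL, ← g1, hg L ⟨hL0, le_rfl⟩ _ hsL, abs_of_nonneg (by linarith [hsL.2])]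
    ring
  have hy2 : dist (g ((1 - k) * L)) p = (1 - k) * dist y p := by
    rw [dist_comm y p, hL, dist_comm, hgp _ hsL]
  obtain ⟨Hy1, Hy2⟩ := Hy _ hy1 hy2
  set s' := (1 - k) * L
  have hs'p := hgp s' hsL
  have hs'D : D ≤ s' := by rw [← hs'p]; exact Hy2 _ (by simp [seg])
  have hs'5 : s' ≤ 5 * D := by
    have := dist_triangle p q (g s')
    have := dist_triangle q qy (g s')
    linarith
  have mem1 : D / 4 ∈ Icc 0 L := ⟨by linarith, by linarith⟩
  have mem2 : D / 2 ∈ Icc 0 L := ⟨by linarith, by linarith⟩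
  have mem3 : 3 * D / 4 ∈ Icc 0 L := ⟨by linarith, by linarith⟩
  have hm := hgp _ mem2
  have hxm := hx _ mem2
  have hms : dist (g s') (g (D/2)) = s' - D / 2 := by
    rw [hg _ hsL _ mem2, abs_of_nonneg (by linarith)]
  have hsv : dist (g s') (g (3 * D / 4)) = s' - 3 * D / 4 := by
    rw [hg _ hsL _ mem3, abs_of_nonneg (by linarith)]
  have hpx' : dist p x' ≤ 5 * D := by
    have := dist_triangle p q x'
    have := dist_triangle q qx x'
    linarith
  set m := g (D / 2)
  have far : ∀ z, D ≤ dist p z → D / 4 ≤ dist z m := by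
    intro z hz
    have := dist_triangle p m z
    rw [dist_comm m z] at this
    linarith
  set P := {z | D / 4 ≤ dist z m}
  have c1 : Conn P (g (D / 4)) p (D / 4) := by
    apply conn_seg hX.1
    · rw [dist_comm, hgp _ mem1]
    · intro z hz
      have h1 : dist (g (D/4)) z + dist z p = dist (g (D/4)) p := hz
      rw [dist_comm (g (D/4)) p, hgp _ mem1] at h1
      have := dist_triangle p z m
      have := dist_comm z p
      have := dist_nonneg (x := g (D/4)) (y := z)
      show D / 4 ≤ dist z m
      linarith
  have c2 : Conn P p x' (5 * D) := by
    apply conn_seg hX.1 hpx'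
    intro z hz
    have h1 : dist p z + dist z x' = dist p x' := hz
    have := dist_triangle x z m
    have := dist_triangle x x' z
    have := dist_comm x' p
    have := dist_comm x' z
    have := dist_triangle p z m
    show D / 4 ≤ dist z m
    linarith
  have c3 : Conn P x' qx D := by
    apply Conn.symm
    exact conn_seg hX.1 Hx1 (fun z hz => far z (Hx2 z hz))
  have c4 : Conn P qx qy (6 * D) := by
    apply conn_seg hX.1
    · have := dist_triangle qx q qy
      rw [dist_comm qx q] at this
      linarith
    · intro z hz
      apply far
      apply hfar
      simp only [seg, mem_ofPred_eq] at hz hqx hqy ⊢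
      have := dist_triangle x z y
      have := dist_triangle x qx z
      have := dist_triangle z qy y
      have := dist_triangle qx q qy
      have := dist_comm qx q
      have := dist_comm qx x
      have := dist_comm q x
      linarith
  have c5 : Conn P qy (g s') D := conn_seg hX.1 Hy1 (fun z hz => far z (Hy2 z hz))
  have c6 : Conn P (g s') (g (3 * D / 4)) (5 * D + 3 * D / 4) := by
    apply conn_seg hX.1
    · linarith
    · intro z hz
      have h1 : dist (g s') z + dist z (g (3 * D / 4)) = dist (g s') (g (3 * D / 4)) := hz
      have := dist_triangle (g s') z m
      have := dist_nonneg (x := z) (y := g (3 * D / 4))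
      show D / 4 ≤ dist z m
      linarith
  have := ((((c1.trans c2).trans c3).trans c4).trans c5).trans c6
  convert this using 1
  ring

lemma conn_path {X : Type*} [MetricSpace X] {P : Set X} {u v : X} {L : ℝ} (h : Conn P u v L) :
    ∃ γ : ℝ → X, ContinuousOn γ (Icc 0 1) ∧ γ 0 = u ∧ γ 1 = v ∧ (∀ s ∈ Icc (0:ℝ) 1, γ s ∈ P) ∧
      eVariationOn γ (Icc 0 1) ≤ ENNReal.ofReal L := by
  obtain ⟨hL, γ, h0, h1, h2, h3⟩ := h
  have hmap : MapsTo (fun s : ℝ => L * s) (Icc 0 1) (Icc 0 L) := by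
    intro s hs
    exact ⟨mul_nonneg hL hs.1, by nlinarith [hs.2]⟩
  have hlip : LipschitzOnWith 1 γ (Icc 0 L) := by
    apply LipschitzOnWith.of_dist_le_mul
    intro a ha c hc
    simpa [Real.dist_eq] using h2 a ha c hc
  refine ⟨fun s => γ (L * s), ?_, by simpa, by simpa, fun s hs => h3 _ (hmap hs), ?_⟩
  · exact hlip.continuousOn.comp (by fun_prop) hmap
  · have k := hlip.comp_eVariationOn_le hmap
    have hm : MonotoneOn (fun s : ℝ => L * s) (Icc 0 1) := by
      intro a _ c _ hac
      exact mul_le_mul_of_nonneg_left hac hL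
    have k2 := hm.eVariationOn_le (a := 0) (b := 1) (by simp) (by simp)
    simp only [inter_self, mul_one, mul_zero, sub_zero, ENNReal.coe_one, one_mul] at k k2
    exact k.trans k2

lemma div_bound {X : Type*} [MetricSpace X] (κ : ℝ → ℝ) (hκ : IsSublinearFn κ) (b : ℝ → X)
    (t ρ : ℝ) (hρ : 0 < ρ) (ht : ρ < t)
    (h : Conn {z | ρ ≤ dist z (b t)} (b (t - ρ)) (b (t + ρ)) (76 * ρ)) :
    divKappa κ b (ρ / κ t) / ENNReal.ofReal (ρ / κ t) ≤ ENNReal.ofReal 76 := by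
  have hk : 0 < κ t := lt_of_lt_of_le one_pos (hκ.one_le t)
  have hr : ρ / κ t * κ t = ρ := by field_simp
  obtain ⟨γ, p1, p2, p3, p4, p5⟩ := conn_path h
  have hγ : γ ∈ pathsOutside κ b (ρ / κ t) t := by
    refine ⟨p1, by rw [hr, p2], by rw [hr, p3], ?_⟩
    intro s hs
    rw [hr, mem_ball, not_lt]
    exact p4 s hs
  have e1 : rhoKappa κ b (ρ / κ t) t ≤ ENNReal.ofReal (76 * ρ) :=
    (iInf₂_le γ hγ).trans p5
  have e2 : divKappa κ b (ρ / κ t) ≤ ENNReal.ofReal (76 * ρ) / ENNReal.ofReal (κ t) :=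
    (iInf₂_le t (by simpa [hr] using ht)).trans (ENNReal.div_le_div_right e1 _)
  rw [← ENNReal.ofReal_div_of_pos hk] at e2
  refine (ENNReal.div_le_div_right e2 _).trans ?_
  rw [← ENNReal.ofReal_div_of_pos (by positivity)]
  apply ENNReal.ofReal_le_ofReal
  apply le_of_eq
  field_simp

lemma kappa_bound (κ : ℝ → ℝ) (hκ : IsSublinearFn κ) (R : ℝ) (hR : 0 < R) :
    ∃ c, 4 * R ≤ c ∧ ∀ t D : ℝ, 0 ≤ t → 0 ≤ D → c * κ t ≤ D → 4 * R * κ (t + D / 2) ≤ D := by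
  have hsub : ∀ s t : ℝ, 0 ≤ s → 0 ≤ t → κ (s + t) ≤ κ s + κ t := by
    intro s t hs ht
    rcases (add_nonneg hs ht).eq_or_lt with h | h
    · have : s = 0 := by linarith
      have : t = 0 := by linarith
      subst_vars
      have := hκ.one_le 0
      simp; linarith
    · have h0 := hκ.one_le 0
      have key : ∀ a c : ℝ, 0 ≤ a → 0 ≤ c → 0 < a + c → a / (a + c) * κ (a + c) ≤ κ a := by
        intro a c ha hc hac
        have := hκ.concave.2 (show (0:ℝ) ∈ Ici 0 by simp)
          (show a + c ∈ Ici 0 from hac.le)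
          (show 0 ≤ c / (a + c) by positivity) (show 0 ≤ a / (a + c) by positivity)
          (by field_simp; ring)
        simp only [smul_eq_mul, mul_zero, zero_add] at this
        rw [div_mul_cancel₀ _ hac.ne'] at this
        have : 0 ≤ c / (a + c) * κ 0 := by positivity
        linarith
      have k1 := key s t hs ht h
      have k2 := key t s ht hs (by linarith)
      rw [add_comm t s] at k2
      have : s / (s + t) * κ (s + t) + t / (s + t) * κ (s + t) = κ (s + t) := by
        field_simp
      linarith
  have hev := hκ.sublinear.eventually (gt_mem_nhds (show (0:ℝ) < 1 / (4 * R) by positivity))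
  obtain ⟨T, hT⟩ := eventually_atTop.1 (hev.and (eventually_gt_atTop 0))
  have hA : ∀ u, 0 ≤ u → κ u ≤ κ T + u / (4 * R) := by
    intro u hu
    rcases le_total u T with h | h
    · have := hκ.mono h
      have : 0 ≤ u / (4 * R) := by positivity
      linarith
    · obtain ⟨h1, h2⟩ := hT u h
      rw [div_lt_iff₀ h2] at h1
      have := hκ.one_le T
      have : 1 / (4 * R) * u = u / (4 * R) := by ring
      linarith
  have hT1 := hκ.one_le T
  refine ⟨8 * R * (1 + κ T), by nlinarith, ?_⟩
  intro t D ht hD h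
  have h1 := hsub t (D / 2) ht (by linarith)
  have h2 := hA (D / 2) (by linarith)
  have h3 : 4 * R * κ (t + D / 2) ≤ 4 * R * (κ t + (κ T + D / 2 / (4 * R))) :=
    mul_le_mul_of_nonneg_left (by linarith) (by positivity)
  have h4 : 4 * R * (κ t + (κ T + D / 2 / (4 * R))) = 4 * R * (κ t + κ T) + D / 2 := by
    field_simp
    ring
  have h5 := hκ.one_le t
  have h6 : κ t + κ T ≤ (1 + κ T) * κ t := by nlinarith
  have h7 : 4 * R * (κ t + κ T) ≤ 4 * R * ((1 + κ T) * κ t) :=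
    mul_le_mul_of_nonneg_left h6 (by positivity)
  linarith

lemma slim1 {X : Type*} [MetricSpace X] [ProperSpace X] (hX : IsCAT0 X)
    (o : X) (κ : ℝ → ℝ) (hκ : IsSublinearFn κ)
    (b : ℝ → X) (hb : IsGeodesicRay b) (hb0 : b 0 = o)
    (π : X → X) (hπ : IsProj b π)
    (hsup : Tendsto (fun r : ℝ => divKappa κ b r / ENNReal.ofReal r) atTop (nhds ⊤)) :
    SlimCond1 κ o b π := by
  have hev := hsup.eventually (lt_mem_nhds (show ENNReal.ofReal 76 < ⊤ from ENNReal.ofReal_lt_top))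
  obtain ⟨R, hR0⟩ := eventually_atTop.1 (hev.and (eventually_gt_atTop 0))
  have hRpos : 0 < R := (hR0 R le_rfl).2
  have hR : ∀ t ρ : ℝ, R * κ t ≤ ρ → ρ < t →
      ¬ Conn {z | ρ ≤ dist z (b t)} (b (t - ρ)) (b (t + ρ)) (76 * ρ) := by
    intro t ρ h1 h2 h3
    have hk : 0 < κ t := lt_of_lt_of_le one_pos (hκ.one_le t)
    have hρ : 0 < ρ := lt_of_lt_of_le (by positivity) h1
    have := div_bound κ hκ b t ρ hρ h2 h3
    exact absurd this (not_le.2 (hR0 (ρ / κ t) ((le_div_iff₀ hk).2 h1)).1)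
  obtain ⟨c, hc4, hc⟩ := kappa_bound κ hκ R hRpos
  refine ⟨c, by linarith, ?_⟩
  rintro x y ⟨s, hs, rfl⟩
  have hs : 0 ≤ s := hs
  obtain ⟨⟨t, ht, hpt⟩, hpd⟩ := hπ x
  have ht : 0 ≤ t := ht
  have hot : dist o (π x) = t := by
    rw [← hpt, ← hb0, hb 0 t le_rfl ht, zero_sub, abs_neg, abs_of_nonneg ht]
  rw [hot]
  by_contra! hcon
  have hk := hκ.one_le t
  have hnear : ∀ u, 0 ≤ u → dist x (π x) ≤ dist x (b u) := by
    intro u hu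
    rw [hpd]
    exact infDist_le_dist_of_mem ⟨u, hu, rfl⟩
  set D := infDist (π x) (seg x (b s)) with hD
  have hD0 : 0 < D := lt_of_le_of_lt (mul_nonneg (by linarith) (by linarith)) hcon
  rcases le_total t s with hts | hts
  · obtain ⟨h1, h2⟩ := main_conn hX (π x) x (b s) D hD0 hD.symm (fun u => b (t + u)) (s - t)
      (by rw [← hpt, hb t s ht hs, abs_sub_comm, abs_of_nonneg (by linarith)])
      (by simpa using hpt) (by simp)
      (by
        intro a ha a' ha'
        rw [hb _ _ (by linarith [ha.1]) (by linarith [ha'.1])]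
        congr 1; ring)
      (by
        intro a ha
        exact hnear _ (by linarith [ha.1]))
    apply hR (t + D / 2) (D / 4)
    · linarith [hc t D ht hD0.le hcon.le]
    · linarith
    · convert h2 using 1
      · congr 1; ring
      · congr 1; ring
      · ring
  · obtain ⟨h1, h2⟩ := main_conn hX (π x) x (b s) D hD0 hD.symm (fun u => b (t - u)) (t - s)
      (by rw [← hpt, hb t s ht hs, abs_of_nonneg (by linarith)])
      (by simpa using hpt) (by simp)
      (by
        intro a ha a' ha'
        rw [hb _ _ (by linarith [ha.2]) (by linarith [ha'.2]), ← abs_neg]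
        congr 1; ring)
      (by
        intro a ha
        exact hnear _ (by linarith [ha.2]))
    apply hR (t - D / 2) (D / 4)
    · have h3 := hκ.mono (show t - D / 2 ≤ t by linarith)
      have h4 := hκ.one_le (t - D / 2)
      nlinarith
    · linarith
    · convert h2.symm using 1
      · congr 1; ring
      · congr 1; ring
      · ring

lemma seg_isClosed {X : Type*} [MetricSpace X] (x y : X) : IsClosed (seg x y) := by
  unfold seg
  exact isClosed_eq (by fun_prop) (by fun_prop)

lemma infDist_seg {X : Type*} [MetricSpace X] [ProperSpace X] (hX : IsCAT0 X) (p x y w : X)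
    (hw : w ∈ seg p y) : infDist w (seg x y) ≤ infDist p (seg x y) := by
  obtain ⟨q, hqs, hq⟩ := (seg_isClosed x y).exists_infDist_eq_dist ⟨x, by simp [seg]⟩ p
  rw [hq]
  have hw' : dist p w + dist w y = dist p y := hw
  have hqs' : dist x q + dist q y = dist x y := hqs
  have hp0 : 0 ≤ dist p y := dist_nonneg
  rcases hp0.eq_or_lt with h | h
  · have h1 : dist p w = 0 := by
      linarith [dist_nonneg (x := p) (y := w), dist_nonneg (x := w) (y := y)]
    rw [← dist_eq_zero.1 h1]
    exact infDist_le_dist_of_mem hqs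
  have hl0 : 0 ≤ dist w y / dist p y := by positivity
  have hl1 : dist w y / dist p y ≤ 1 := by
    rw [div_le_one h]; linarith [dist_nonneg (x := p) (y := w)]
  have hle : dist w y / dist p y * dist p y = dist w y := by field_simp
  set l := dist w y / dist p y
  obtain ⟨q', a1, a2⟩ := geod_pt hX.1 y q l hl0 hl1
  have t := cat0_thales hX y p q w q' l hl0 hl1 (by rw [dist_comm y w, dist_comm y p]; linarith)
    (by rw [dist_comm w p, dist_comm y p]; linarith) a1 a2
  have hmem : q' ∈ seg x y := by
    simp only [seg, mem_ofPred_eq]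
    have := dist_triangle x q' y
    have := dist_triangle x q q'
    have := dist_comm q q'
    have := dist_comm q y
    have := dist_comm q' y
    linarith
  refine (infDist_le_dist_of_mem hmem).trans (t.trans ?_)
  nlinarith [dist_nonneg (x := p) (y := q)]

lemma seg_symm {X : Type*} [MetricSpace X] (x y : X) : seg x y = seg y x := by
  ext z
  simp only [seg, mem_ofPred_eq]
  rw [dist_comm x z, dist_comm z y, dist_comm x y, add_comm]

lemma slim3 {X : Type*} [MetricSpace X] [ProperSpace X] (hX : IsCAT0 X)
    (o : X) (κ : ℝ → ℝ) (b : ℝ → X) (hb : IsGeodesicRay b)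
    (π : X → X) (hπ : IsProj b π) (h : SlimCond1 κ o b π) : SlimCond3 κ o b π := by
  obtain ⟨c, hc, h⟩ := h
  refine ⟨c, hc, ?_⟩
  intro x y z hyz w hw
  have hy : y ∈ rayIm b := hyz (by simp [seg])
  have hz : z ∈ rayIm b := hyz (by simp [seg])
  have hwb : w ∈ rayIm b := hyz hw
  have hor : w ∈ seg (π x) y ∨ w ∈ seg (π x) z := by
    obtain ⟨t, ht, hpt⟩ := (hπ x).1
    obtain ⟨s1, h1, rfl⟩ := hy
    obtain ⟨s2, h2, rfl⟩ := hz
    obtain ⟨u, hu, rfl⟩ := hwb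
    rw [← hpt]
    simp only [seg, mem_ofPred_eq] at hw ⊢
    rw [hb _ _ h1 hu, hb _ _ hu h2, hb _ _ h1 h2] at hw
    rw [hb _ _ ht hu, hb _ _ hu h1, hb _ _ hu h2, hb _ _ ht h1, hb _ _ ht h2]
    grind
  rcases hor with h' | h'
  · refine le_trans (infDist_le_infDist_of_subset subset_union_left ⟨x, by simp [seg]⟩) ?_
    rw [seg_symm]
    exact (infDist_seg hX _ x y w h').trans (h x y hy)
  · refine le_trans (infDist_le_infDist_of_subset subset_union_right ⟨x, by simp [seg]⟩) ?_
    exact (infDist_seg hX _ x z w h').trans (h x z hz)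

/-- Theorem 3.12. If the κ-lower divergence of a geodesic ray `b` in a
proper CAT(0) space is superlinear, then `b` is `κ`-slim (it satisfies κ-slim condition 4,
and hence all four κ-slim conditions). -/
theorem superlinear_divergence_implies_slim
    {X : Type*} [MetricSpace X] [ProperSpace X] (hX : IsCAT0 X)
    (o : X) (κ : ℝ → ℝ) (hκ : IsSublinearFn κ)
    (b : ℝ → X) (hb : IsGeodesicRay b) (hb0 : b 0 = o)
    (π : X → X) (hπ : IsProj b π)
    (hsup : Tendsto (fun r : ℝ => divKappa κ b r / ENNReal.ofReal r) atTop (nhds ⊤)) :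
    SlimCond4 κ o b π ∧ SlimCond1 κ o b π ∧ SlimCond2 κ o b π ∧ SlimCond3 κ o b π := by
  have h1 := slim1 hX o κ hκ b hb hb0 π hπ hsup
  have h3 := slim3 hX o κ b hb π hπ h1
  refine ⟨?_, h1, ?_, h3⟩
  · obtain ⟨c, hc, h⟩ := h3
    refine ⟨c, hc, ?_⟩
    intro x y z hyz _ hz w hw
    exact (h x y z hyz w hw).trans (mul_le_mul_of_nonneg_left (hκ.mono hz) hc)
  · obtain ⟨c, hc, h⟩ := h1
    exact ⟨c, hc, fun x y hy => ⟨π x, ⟨(hπ x).1, by simp [seg]⟩, h x y hy⟩⟩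
end
end
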